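/- Let V be a real inner product space of dimension 4m ≥ 8 with a quaternionic structure I, J, K, and let R_0 be the associated quaternionic curvature tensor. Then Q(R_0) = (2m+4) R_0. -/

import Mathlib

/-! The tensor `R₀` is a combination of products of the four bilinear forms
`⟪A x, y⟫`, `A ∈ {1, I, J, K}`. Once `X, Y, Z, W` are fixed, each of the bilinear forms
`(p, q) ↦ R₀(X, Y, p, q)` and `(p, q) ↦ R₀(X, p, Z, q)` is therefore the form of an element of
the span of `1, I, J, K` plus a sum of decomposable forms `⟪u, p⟫ ⟪v, q⟫`
(`quatR0_front`, `quatR0_cross`). The Hilbert-Schmidt pairing of two such forms is given by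
`sum_sum_form_mul`: the operators `1, I, J, K` are mutually orthogonal of square norm `4 m`,
and all other pairings reduce by Parseval to inner products of the vectors involved.
The quaternion relations express these through the numbers `⟪A x, y⟫` with
`x, y ∈ {X, Y, Z, W}`, and the theorem becomes a polynomial identity in those numbers. -/

open scoped RealInnerProductSpace
open Finset

variable {V : Type*} [NormedAddCommGroup V] [InnerProductSpace ℝ V]

/-- An algebraic curvature tensor on a real inner product space: a multilinear map
(linearity in the first slot, together with the symmetries, gives full multilinearity)
satisfying the standard symmetries and the first Bianchi identity. -/
structure IsAlgCurvTensor (R : V → V → V → V → ℝ) : Prop where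
  addLeft : ∀ X X' Y Z W, R (X + X') Y Z W = R X Y Z W + R X' Y Z W
  smulLeft : ∀ (c : ℝ) (X Y Z W : V), R (c • X) Y Z W = c * R X Y Z W
  antisymm : ∀ X Y Z W, R X Y Z W = - R Y X Z W
  pairSymm : ∀ X Y Z W, R X Y Z W = R Z W X Y
  bianchi : ∀ X Y Z W, R X Y Z W + R Y Z X W + R Z X Y W = 0

/-- The bilinear expression `B(R,S)`, computed with respect to an orthonormal basis
(the result is independent of the choice of orthonormal basis). -/
noncomputable def Bop [FiniteDimensional ℝ V] (R S : V → V → V → V → ℝ)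
    (X Y Z W : V) : ℝ :=
  let b := stdOrthonormalBasis ℝ V
  (1 / 2) * ∑ p, ∑ q,
      (R X Y (b p) (b q) * S Z W (b p) (b q) + R Z W (b p) (b q) * S X Y (b p) (b q))
  + ∑ p, ∑ q,
      (R X (b p) Z (b q) * S Y (b p) W (b q) + R Y (b p) W (b q) * S X (b p) Z (b q))
  - ∑ p, ∑ q,
      (R X (b p) W (b q) * S Y (b p) Z (b q) + R Y (b p) Z (b q) * S X (b p) W (b q))

/-- `Q(R) = B(R,R)`. -/
noncomputable def Qop [FiniteDimensional ℝ V] (R : V → V → V → V → ℝ) :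
    V → V → V → V → ℝ :=
  Bop R R

/-- `R` has nonnegative isotropic curvature. -/
def NonnegIsotropic (R : V → V → V → V → ℝ) : Prop :=
  ∀ e₁ e₂ e₃ e₄ : V, Orthonormal ℝ ![e₁, e₂, e₃, e₄] →
    0 ≤ R e₁ e₃ e₁ e₃ + R e₁ e₄ e₁ e₄ + R e₂ e₃ e₂ e₃ + R e₂ e₄ e₂ e₄
        - 2 * R e₁ e₂ e₃ e₄

/-- The Ricci tensor of an algebraic curvature tensor. -/
noncomputable def RicciT [FiniteDimensional ℝ V] (R : V → V → V → V → ℝ)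
    (X Y : V) : ℝ :=
  ∑ p, R X (stdOrthonormalBasis ℝ V p) Y (stdOrthonormalBasis ℝ V p)

/-- An orthogonal complex structure on `V`. -/
def IsOrthCplx (J : V →ₗ[ℝ] V) : Prop :=
  (∀ X, J (J X) = -X) ∧ (∀ X Y : V, ⟪J X, J Y⟫ = ⟪X, Y⟫)

/-- A quaternionic structure on `V`: three orthogonal complex structures with `IJK = -id`. -/
def IsQuatStruct (I J K : V →ₗ[ℝ] V) : Prop :=
  IsOrthCplx I ∧ IsOrthCplx J ∧ IsOrthCplx K ∧ ∀ X, I (J (K X)) = -X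

/-- `R` is `J`-invariant (Kähler). -/
def IsKaehlerTensor (J : V →ₗ[ℝ] V) (R : V → V → V → V → ℝ) : Prop :=
  ∀ X Y Z W, R X Y (J Z) (J W) = R X Y Z W

/-- `R` is hyper-Kähler with respect to the quaternionic structure `I, J, K`. -/
def IsHyperKaehler (I J K : V →ₗ[ℝ] V) (R : V → V → V → V → ℝ) : Prop :=
  IsKaehlerTensor I R ∧ IsKaehlerTensor J R ∧ IsKaehlerTensor K R

/-- The curvature tensor `R₀` of quaternionic projective space, associated to a
quaternionic structure `I, J, K`. -/
noncomputable def quatR0 (I J K : V →ₗ[ℝ] V) (X Y Z W : V) : ℝ :=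
  (1 / 4) * (⟪X, Z⟫ * ⟪Y, W⟫ - ⟪X, W⟫ * ⟪Y, Z⟫
    + 2 * ⟪I X, Y⟫ * ⟪I Z, W⟫ + ⟪I X, Z⟫ * ⟪I Y, W⟫ - ⟪I X, W⟫ * ⟪I Y, Z⟫
    + 2 * ⟪J X, Y⟫ * ⟪J Z, W⟫ + ⟪J X, Z⟫ * ⟪J Y, W⟫ - ⟪J X, W⟫ * ⟪J Y, Z⟫
    + 2 * ⟪K X, Y⟫ * ⟪K Z, W⟫ + ⟪K X, Z⟫ * ⟪K Y, W⟫ - ⟪K X, W⟫ * ⟪K Y, Z⟫)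

section Contraction

variable {ι : Type*} [Fintype ι]

/-- Hilbert-Schmidt pairing of two bilinear forms, each the sum of a combination of the
forms of operators `A a` and of decomposable forms. The hypothesis says that the images of
any vector under the `A a` are orthogonal and of the same length as the vector. -/
lemma sum_sum_form_mul {α κ : Type*} [Fintype α] [DecidableEq α] [Fintype κ]
    (b : OrthonormalBasis ι ℝ V) (A : α → V →ₗ[ℝ] V)
    (hA : ∀ a a' x, ⟪A a x, A a' x⟫ = if a = a' then ⟪x, x⟫ else 0)
    (c c' : α → ℝ) (u v u' v' : κ → V) :
    ∑ p, ∑ q, (∑ a, c a * ⟪A a (b p), b q⟫ + ∑ k, ⟪u k, b p⟫ * ⟪v k, b q⟫) *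
        (∑ a, c' a * ⟪A a (b p), b q⟫ + ∑ k, ⟪u' k, b p⟫ * ⟪v' k, b q⟫)
      = (Fintype.card ι : ℝ) * ∑ a, c a * c' a
        + ∑ a, ∑ k, c a * ⟪A a (u' k), v' k⟫
        + ∑ a, ∑ k, c' a * ⟪A a (u k), v k⟫
        + ∑ k, ∑ l, ⟪u k, u' l⟫ * ⟪v k, v' l⟫ := by
  have pars : ∀ x y : V, ∑ q, ⟪x, b q⟫ * ⟪y, b q⟫ = ⟪x, y⟫ := fun x y => by
    simp_rw [real_inner_comm (b _) y]
    simpa only [real_inner_comm] using b.sum_inner_mul_inner x y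
  -- Sum over `q` by Parseval.
  have h1 : ∀ p, ∑ q, (∑ a, c a * ⟪A a (b p), b q⟫ + ∑ k, ⟪u k, b p⟫ * ⟪v k, b q⟫) *
        (∑ a, c' a * ⟪A a (b p), b q⟫ + ∑ k, ⟪u' k, b p⟫ * ⟪v' k, b q⟫)
      = ⟪∑ a, c a • A a (b p) + ∑ k, ⟪u k, b p⟫ • v k,
          ∑ a, c' a • A a (b p) + ∑ k, ⟪u' k, b p⟫ • v' k⟫ := fun p => by
    rw [← pars]
    simp only [inner_add_left, sum_inner, real_inner_smul_left]
  have mixed : ∀ a (x y : V), ∑ p, ⟪x, b p⟫ * ⟪A a (b p), y⟫ = ⟪A a x, y⟫ := fun a x y => by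
    conv_rhs => rw [← b.sum_repr' x]
    simp only [map_sum, map_smul, sum_inner, real_inner_smul_left, real_inner_comm x]
  have diag : ∀ p, ⟪∑ a, c a • A a (b p), ∑ a, c' a • A a (b p)⟫ = ∑ a, c a * c' a :=
    fun p => by
    simp [sum_inner, inner_sum, real_inner_smul_left, real_inner_smul_right, hA,
      mul_comm]
  simp_rw [h1, inner_add_left, inner_add_right, diag, sum_add_distrib]
  have e1 : ∑ p, ⟪∑ a, c a • A a (b p), ∑ k, ⟪u' k, b p⟫ • v' k⟫
      = ∑ a, ∑ k, c a * ⟪A a (u' k), v' k⟫ := by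
    simp_rw [sum_inner, inner_sum, real_inner_smul_left, real_inner_smul_right]
    rw [sum_comm]
    refine sum_congr rfl fun a _ => ?_
    rw [sum_comm]
    refine sum_congr rfl fun k _ => ?_
    rw [← mixed, mul_sum]
  have e2 : ∑ p, ⟪∑ k, ⟪u k, b p⟫ • v k, ∑ a, c' a • A a (b p)⟫
      = ∑ a, ∑ k, c' a * ⟪A a (u k), v k⟫ := by
    simp_rw [real_inner_comm (∑ a, c' a • A a (b _)), sum_inner, inner_sum,
      real_inner_smul_left, real_inner_smul_right]
    rw [sum_comm]
    refine sum_congr rfl fun a _ => ?_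
    rw [sum_comm]
    refine sum_congr rfl fun k _ => ?_
    rw [← mixed, mul_sum]
  have e3 : ∑ p, ⟪∑ k, ⟪u k, b p⟫ • v k, ∑ k, ⟪u' k, b p⟫ • v' k⟫
      = ∑ k, ∑ l, ⟪u k, u' l⟫ * ⟪v k, v' l⟫ := by
    simp_rw [sum_inner, inner_sum, real_inner_smul_left, real_inner_smul_right]
    rw [sum_comm]
    refine sum_congr rfl fun k _ => ?_
    rw [sum_comm]
    refine sum_congr rfl fun l _ => ?_
    rw [← pars (u k), sum_mul]
    exact sum_congr rfl fun p _ => by ring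
  rw [e1, e2, e3, sum_const, card_univ, nsmul_eq_mul]
  ring

end Contraction

lemma IsOrthCplx.inner_left {A : V →ₗ[ℝ] V} (h : IsOrthCplx A) (x y : V) :
    ⟪x, A y⟫ = -⟪A x, y⟫ := by
  rw [← h.2 x (A y), h.1, inner_neg_right]

lemma IsOrthCplx.inner_self {A : V →ₗ[ℝ] V} (h : IsOrthCplx A) (x : V) : ⟪A x, x⟫ = 0 := by
  have := h.inner_left x x
  rw [real_inner_comm] at this
  linarith

/-- The quaternion multiplication table, a consequence of `IJK = -1`. -/
lemma IsQuatStruct.mul_table {I J K : V →ₗ[ℝ] V} (h : IsQuatStruct I J K) (x : V) :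
    I (J x) = K x ∧ J (K x) = I x ∧ K (I x) = J x ∧
      J (I x) = -K x ∧ K (J x) = -I x ∧ I (K x) = -J x := by
  obtain ⟨hI, hJ, hK, h⟩ := h
  have ij : ∀ x, I (J x) = K x := fun x => by
    have := h (K x); rw [hK.1] at this; simpa using this
  have jk : ∀ x, J (K x) = I x := fun x => by
    have := congrArg I (h x); rw [hI.1] at this; simpa using this
  have ik : ∀ x, I (K x) = -J x := fun x => by rw [← ij, hI.1]
  have ji : ∀ x, J (I x) = -K x := fun x => by rw [← jk, hJ.1]
  have kj : ∀ x, K (J x) = -I x := fun x => by rw [← ij, hJ.1, map_neg]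
  have ki : ∀ x, K (I x) = J x := fun x => by rw [← jk, kj, ik, neg_neg]
  exact ⟨ij x, jk x, ki x, ji x, kj x, ik x⟩

/-- `R₀(X, Y, ·, ·)` as an element of the span of `1, I, J, K` plus decomposable forms. -/
lemma quatR0_front {I J K : V →ₗ[ℝ] V} (X Y p q : V) :
    quatR0 I J K X Y p q = (1 / 4) *
      (∑ a, ![0, 2 * ⟪I X, Y⟫, 2 * ⟪J X, Y⟫, 2 * ⟪K X, Y⟫] a *
          ⟪(![LinearMap.id, I, J, K] : Fin 4 → V →ₗ[ℝ] V) a p, q⟫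
        + ∑ k, ⟪![X, I X, J X, K X, -Y, -I Y, -J Y, -K Y] k, p⟫ *
            ⟪![Y, I Y, J Y, K Y, X, I X, J X, K X] k, q⟫) := by
  simp [quatR0, Fin.sum_univ_succ]
  ring

/-- `R₀(X, ·, Z, ·)` as an element of the span of `1, I, J, K` plus decomposable forms. -/
lemma quatR0_cross {I J K : V →ₗ[ℝ] V} (h : IsQuatStruct I J K) (X Z p q : V) :
    quatR0 I J K X p Z q = (1 / 4) *
      (∑ a, ![⟪X, Z⟫, ⟪I X, Z⟫, ⟪J X, Z⟫, ⟪K X, Z⟫] a *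
          ⟪(![LinearMap.id, I, J, K] : Fin 4 → V →ₗ[ℝ] V) a p, q⟫
        + ∑ k, ⟪![-Z, I Z, J Z, K Z, (2 : ℝ) • I X, (2 : ℝ) • J X, (2 : ℝ) • K X] k, p⟫ *
            ⟪![X, I X, J X, K X, I Z, J Z, K Z] k, q⟫) := by
  have e : ∀ {A : V →ₗ[ℝ] V}, IsOrthCplx A → ⟪A p, Z⟫ = -⟪A Z, p⟫ := fun hA => by
    rw [real_inner_comm, hA.inner_left]
  simp [quatR0, Fin.sum_univ_succ, e h.1, e h.2.1, e h.2.2.1, real_inner_smul_left,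
    real_inner_comm Z p]
  ring

theorem Q_of_quatR0 [FiniteDimensional ℝ V]
    (m : ℕ) (hm : 2 ≤ m) (hdim : Module.finrank ℝ V = 4 * m)
    (I J K : V →ₗ[ℝ] V) (hquat : IsQuatStruct I J K) :
    ∀ X Y Z W : V, Qop (quatR0 I J K) X Y Z W
      = (2 * (m : ℝ) + 4) * quatR0 I J K X Y Z W := by
  intro X Y Z W
  have hI := hquat.1
  have hJ := hquat.2.1
  have hK := hquat.2.2.1
  have ij := fun x => (hquat.mul_table x).1
  have jk := fun x => (hquat.mul_table x).2.1
  have ki := fun x => (hquat.mul_table x).2.2.1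
  have ji := fun x => (hquat.mul_table x).2.2.2.1
  have kj := fun x => (hquat.mul_table x).2.2.2.2.1
  have ik := fun x => (hquat.mul_table x).2.2.2.2.2
  have hA : ∀ a a' x, ⟪(![LinearMap.id, I, J, K] : Fin 4 → V →ₗ[ℝ] V) a x,
      (![LinearMap.id, I, J, K] : Fin 4 → V →ₗ[ℝ] V) a' x⟫ = if a = a' then ⟪x, x⟫ else 0 := by
    intro a a' x
    fin_cases a <;> fin_cases a' <;>
      simp [hI.inner_left, hJ.inner_left, hK.inner_left, hI.1, hJ.1, hK.1, ij, jk, ki, ji, kj,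
        ik, hI.inner_self, hJ.inner_self, hK.inner_self, -inner_self_eq_norm_sq_to_K]
  have pull : ∀ s t : ℝ, (1 / 4 * s) * (1 / 4 * t) = 1 / 16 * (s * t) := fun s t => by ring
  have twice : ∀ s t : ℝ, s * t + t * s = 2 * (s * t) := fun s t => by ring
  -- Reduce to the numbers `⟪A x, y⟫` with `(x, y)` in the order `X, Y, Z, W`.
  have swap : ∀ {A : V →ₗ[ℝ] V}, IsOrthCplx A → ∀ x y, ⟪A y, x⟫ = -⟪A x, y⟫ := fun hA x y => by
    rw [real_inner_comm, hA.inner_left]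
  have card : (Fintype.card (Fin (Module.finrank ℝ V)) : ℝ) = 4 * m := by
    rw [Fintype.card_fin, hdim]; push_cast; ring
  simp only [Qop, Bop, twice]
  simp_rw [quatR0_front X Y, quatR0_front Z W, quatR0_cross hquat X Z, quatR0_cross hquat Y W,
    quatR0_cross hquat X W, quatR0_cross hquat Y Z, pull, ← mul_sum,
    sum_sum_form_mul _ _ hA, card]
  simp only [Fin.sum_univ_succ, Fin.sum_univ_zero, Matrix.cons_val_zero, Matrix.cons_val_succ,
    LinearMap.id_apply, inner_neg_left, inner_neg_right, real_inner_smul_left,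
    real_inner_smul_right, map_neg, map_smul, hI.inner_left, hJ.inner_left, hK.inner_left,
    hI.1, hJ.1, hK.1, ij, jk, ki, ji, kj, ik,
    swap hI X Y, swap hJ X Y, swap hK X Y, real_inner_comm X Y,
    swap hI X Z, swap hJ X Z, swap hK X Z, real_inner_comm X Z,
    swap hI X W, swap hJ X W, swap hK X W, real_inner_comm X W,
    swap hI Y Z, swap hJ Y Z, swap hK Y Z, real_inner_comm Y Z,
    swap hI Y W, swap hJ Y W, swap hK Y W, real_inner_comm Y W,
    swap hI Z W, swap hJ Z W, swap hK Z W, real_inner_comm Z W]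
  ring
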